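/- arXiv:2208.01423 — 8 statements merged into one kernel-verified Lean document; each statement's English description precedes it below -/
import Mathlib

section
/- Let X = EuclideanSpace ℝ (Fin n), let V be a nonempty set of impulse values in (Fin q → ℝ), let v : X → ℝ be bounded and uniformly continuous, let g : X → (Fin q → ℝ) → X be such that x ↦ g(x, η) is K-Lipschitz for every η ∈ V (with a constant K independent of η), and let χ : X → (Fin q → ℝ) → ℝ be nonnegative and such that x ↦ χ(x, η) is K'-Lipschitz for every η ∈ V (with K' independent of η). Then the function x ↦ inf_{η ∈ V} [ v(x + g(x, η)) + χ(x, η) ] is uniformly continuous on X. -/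
open scoped BigOperators

/-- Infimum half of Proposition 2.5: the minimum non-local cost operator
`x ↦ inf_{η ∈ V} [v (x + g x η) + χ x η]` applied to a bounded uniformly continuous
function `v` is uniformly continuous, provided `g` and `χ` are Lipschitz in the state
uniformly in the impulse value and `χ` is nonnegative. -/
theorem inf_nonlocal_operator_uniformContinuous
    (n q : ℕ) (V : Set (Fin q → ℝ)) (hV : V.Nonempty)
    (v : EuclideanSpace ℝ (Fin n) → ℝ)
    (M : ℝ) (hvb : ∀ x, |v x| ≤ M) (hvu : UniformContinuous v)
    (g : EuclideanSpace ℝ (Fin n) → (Fin q → ℝ) → EuclideanSpace ℝ (Fin n))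
    (K : ℝ) (hK : 0 ≤ K)
    (hg : ∀ η ∈ V, ∀ x₁ x₂ : EuclideanSpace ℝ (Fin n),
      ‖g x₁ η - g x₂ η‖ ≤ K * ‖x₁ - x₂‖)
    (χ : EuclideanSpace ℝ (Fin n) → (Fin q → ℝ) → ℝ)
    (hχ : ∀ x η, 0 ≤ χ x η)
    (K' : ℝ) (hK' : 0 ≤ K')
    (hχL : ∀ η ∈ V, ∀ x₁ x₂ : EuclideanSpace ℝ (Fin n),
      |χ x₁ η - χ x₂ η| ≤ K' * ‖x₁ - x₂‖) :
    UniformContinuous fun x : EuclideanSpace ℝ (Fin n) =>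
      ⨅ η : V, (v (x + g x (η : Fin q → ℝ)) + χ x (η : Fin q → ℝ)) := by
  have : Nonempty V := hV.to_subtype
  have hbdd : ∀ x, BddBelow (Set.range fun η : V =>
      v (x + g x (η : Fin q → ℝ)) + χ x (η : Fin q → ℝ)) := by
    intro x
    refine ⟨-M, ?_⟩
    rintro _ ⟨η, rfl⟩
    have h1 := (abs_le.mp (hvb (x + g x η))).1
    have h2 := hχ x η
    show -M ≤ v (x + g x η) + χ x η
    linarith
  rw [Metric.uniformContinuous_iff] at hvu ⊢
  intro ε hε
  obtain ⟨d, hd, hvd⟩ := hvu (ε / 4) (by linarith)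
  have hK1 : 0 < 1 + K := by linarith
  have hK1' : 0 < 1 + K' := by linarith
  refine ⟨min (d / (1 + K)) (ε / 4 / (1 + K')),
    lt_min (div_pos hd hK1) (div_pos (by linarith) hK1'), ?_⟩
  have key : ∀ a b : EuclideanSpace ℝ (Fin n),
      dist a b < min (d / (1 + K)) (ε / 4 / (1 + K')) →
      (⨅ η : V, (v (a + g a (η : Fin q → ℝ)) + χ a (η : Fin q → ℝ))) - ε / 2 ≤
      ⨅ η : V, (v (b + g b (η : Fin q → ℝ)) + χ b (η : Fin q → ℝ)) := by
    intro a b hab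
    refine le_ciInf fun η => ?_
    have h0 := ciInf_le (hbdd a) η
    obtain ⟨h1, h2⟩ := lt_min_iff.mp hab
    rw [lt_div_iff₀ hK1] at h1
    rw [lt_div_iff₀ hK1'] at h2
    rw [dist_eq_norm] at h1 h2
    have hn := norm_nonneg (a - b)
    have h3 : dist (a + g a η) (b + g b η) < d := by
      rw [dist_eq_norm, add_sub_add_comm]
      have := norm_add_le (a - b) (g a η - g b η)
      have := hg η η.2 a b
      linarith
    have h4 := hvd h3
    rw [Real.dist_eq] at h4
    have h5 := (abs_lt.mp h4).2
    have h6 := (abs_le.mp (hχL η η.2 a b)).2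
    linarith
  intro a b hab
  have h1 := key a b hab
  have h2 := key b a (by rwa [dist_comm])
  rw [Real.dist_eq, abs_lt]
  constructor <;> linarith
end

section
/- Let X = EuclideanSpace ℝ (Fin n), let U be a nonempty set of impulse values in (Fin p → ℝ), let v : X → ℝ be bounded and uniformly continuous, let g : X → (Fin p → ℝ) → X be such that x ↦ g(x, ξ) is K-Lipschitz for every ξ ∈ U (with a constant K independent of ξ), and let c : X → (Fin p → ℝ) → ℝ be nonnegative and such that x ↦ c(x, ξ) is K'-Lipschitz for every ξ ∈ U (with K' independent of ξ). Then the function x ↦ sup_{ξ ∈ U} [ v(x + g(x, ξ)) − c(x, ξ) ] is uniformly continuous on X. -/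
open scoped BigOperators

/-- Supremum half of Proposition 2.5: the maximum non-local cost operator
`x ↦ sup_{ξ ∈ U} [v (x + g x ξ) - c x ξ]` applied to a bounded uniformly continuous
function `v` is uniformly continuous, provided `g` and `c` are Lipschitz in the state
uniformly in the impulse value and `c` is nonnegative. -/
theorem sup_nonlocal_operator_uniformContinuous
    (n p : ℕ) (U : Set (Fin p → ℝ)) (hU : U.Nonempty)
    (v : EuclideanSpace ℝ (Fin n) → ℝ)
    (M : ℝ) (hvb : ∀ x, |v x| ≤ M) (hvu : UniformContinuous v)
    (g : EuclideanSpace ℝ (Fin n) → (Fin p → ℝ) → EuclideanSpace ℝ (Fin n))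
    (K : ℝ) (hK : 0 ≤ K)
    (hg : ∀ ξ ∈ U, ∀ x₁ x₂ : EuclideanSpace ℝ (Fin n),
      ‖g x₁ ξ - g x₂ ξ‖ ≤ K * ‖x₁ - x₂‖)
    (c : EuclideanSpace ℝ (Fin n) → (Fin p → ℝ) → ℝ)
    (hc : ∀ x ξ, 0 ≤ c x ξ)
    (K' : ℝ) (hK' : 0 ≤ K')
    (hcL : ∀ ξ ∈ U, ∀ x₁ x₂ : EuclideanSpace ℝ (Fin n),
      |c x₁ ξ - c x₂ ξ| ≤ K' * ‖x₁ - x₂‖) :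
    UniformContinuous fun x : EuclideanSpace ℝ (Fin n) =>
      ⨆ ξ : U, (v (x + g x (ξ : Fin p → ℝ)) - c x (ξ : Fin p → ℝ)) := by
  have : Nonempty U := hU.to_subtype
  have hbdd : ∀ x, BddAbove (Set.range fun ξ : U =>
      (v (x + g x (ξ : Fin p → ℝ)) - c x (ξ : Fin p → ℝ))) := by
    intro x
    refine ⟨M, ?_⟩
    rintro _ ⟨ξ, rfl⟩
    have h1 := (abs_le.mp (hvb (x + g x ξ))).2
    have h2 := hc x ξ
    show v (x + g x ξ) - c x ξ ≤ M
    linarith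
  rw [Metric.uniformContinuous_iff] at hvu ⊢
  intro ε hε
  obtain ⟨η, hη, hv⟩ := hvu (ε / 4) (by linarith)
  have key : ∀ x₁ x₂ : EuclideanSpace ℝ (Fin n), ‖x₁ - x₂‖ < η / (1 + K) →
      ‖x₁ - x₂‖ < ε / 4 / (K' + 1) →
      (⨆ ξ : U, (v (x₁ + g x₁ (ξ : Fin p → ℝ)) - c x₁ (ξ : Fin p → ℝ))) ≤
      (⨆ ξ : U, (v (x₂ + g x₂ (ξ : Fin p → ℝ)) - c x₂ (ξ : Fin p → ℝ))) + ε / 2 := by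
    intro x₁ x₂ h1 h2
    rw [lt_div_iff₀ (by linarith)] at h1 h2
    have h0 := norm_nonneg (x₁ - x₂)
    apply ciSup_le
    intro ξ
    have h3 := le_ciSup (hbdd x₂) ξ
    have h4 := hg ξ ξ.2 x₁ x₂
    have h5 := (abs_le.mp (hcL ξ ξ.2 x₁ x₂)).1
    have h6 : dist (x₁ + g x₁ ξ) (x₂ + g x₂ ξ) < η := by
      rw [dist_eq_norm, add_sub_add_comm]
      have := norm_add_le (x₁ - x₂) (g x₁ ξ - g x₂ ξ)
      linarith
    have h7 := hv h6
    rw [Real.dist_eq] at h7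
    have h8 := (abs_lt.mp h7).2
    linarith
  refine ⟨min (η / (1 + K)) (ε / 4 / (K' + 1)), by positivity, ?_⟩
  intro a b hab
  rw [dist_eq_norm, lt_min_iff] at hab
  have k1 := key a b hab.1 hab.2
  rw [norm_sub_rev] at hab
  have k2 := key b a hab.1 hab.2
  rw [Real.dist_eq, abs_lt]
  constructor <;> linarith
end

section
/- Let X = EuclideanSpace ℝ (Fin n), let b : ℝ → X → (Fin l → ℝ) → X satisfy ‖b(s, x, θ)‖ ≤ M for all s, x, θ, and suppose that for every s and θ the map x ↦ b(s, x, θ) is C-Lipschitz, where M > 0 and C ≥ 0. Let θ : ℝ → (Fin l → ℝ) be a control and t ≤ t' ≤ T. Suppose y₁ : ℝ → X is continuous on [t, T] with derivative b(s, y₁(s), θ(s)) at every s ∈ [t, T] (derivative within [t, T]) and y₁(t) = x, and y₂ : ℝ → X is continuous on [t', T] with derivative b(s, y₂(s), θ(s)) at every s ∈ [t', T] (derivative within [t', T]) and y₂(t') = x'. Then for every s ∈ [t', T], ‖y₂(s) − y₁(s)‖ ≤ exp(C·(T − t')) · ( ‖x' − x‖ + M·(t' − t) ). -/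
/-- Trajectory estimate (ii) of Proposition 2.1: for two trajectories of the controlled
ODE `ẏ(s) = b(s, y(s), θ(s))`, with drift bounded by `M` and `C`-Lipschitz in the state,
started respectively at `x` at time `t` and at `x'` at time `t' ∈ [t, T]`, one has
`‖y₂ s - y₁ s‖ ≤ exp (C * (T - t')) * (‖x' - x‖ + M * (t' - t))` for all `s ∈ [t', T]`. -/
theorem trajectory_estimate_two
    (n l : ℕ)
    (b : ℝ → EuclideanSpace ℝ (Fin n) → (Fin l → ℝ) → EuclideanSpace ℝ (Fin n))
    (M C : ℝ) (hM : 0 < M) (hC : 0 ≤ C)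
    (hb : ∀ (s : ℝ) (x : EuclideanSpace ℝ (Fin n)) (θ : Fin l → ℝ), ‖b s x θ‖ ≤ M)
    (hbLip : ∀ (s : ℝ) (θ : Fin l → ℝ) (x₁ x₂ : EuclideanSpace ℝ (Fin n)),
      ‖b s x₁ θ - b s x₂ θ‖ ≤ C * ‖x₁ - x₂‖)
    (θ : ℝ → Fin l → ℝ) (t t' T : ℝ) (htt' : t ≤ t') (ht'T : t' ≤ T)
    (y₁ y₂ : ℝ → EuclideanSpace ℝ (Fin n)) (x x' : EuclideanSpace ℝ (Fin n))
    (hcont₁ : ContinuousOn y₁ (Set.Icc t T))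
    (hderiv₁ : ∀ s ∈ Set.Icc t T, HasDerivWithinAt y₁ (b s (y₁ s) (θ s)) (Set.Icc t T) s)
    (hinit₁ : y₁ t = x)
    (hcont₂ : ContinuousOn y₂ (Set.Icc t' T))
    (hderiv₂ : ∀ s ∈ Set.Icc t' T, HasDerivWithinAt y₂ (b s (y₂ s) (θ s)) (Set.Icc t' T) s)
    (hinit₂ : y₂ t' = x') :
    ∀ s ∈ Set.Icc t' T,
      ‖y₂ s - y₁ s‖ ≤ Real.exp (C * (T - t')) * (‖x' - x‖ + M * (t' - t)) := by
  intro s hs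
  have h1 : ‖y₁ t' - y₁ t‖ ≤ M * (t' - t) :=
    norm_image_sub_le_of_norm_deriv_le_segment' hderiv₁ (fun r _ => hb _ _ _) t' ⟨htt', ht'T⟩
  have h0 : dist (y₂ t') (y₁ t') ≤ ‖x' - x‖ + M * (t' - t) := by
    rw [dist_eq_norm, hinit₂]
    rw [hinit₁] at h1
    have h2 : x' - y₁ t' = (x' - x) - (y₁ t' - x) := by abel
    rw [h2]
    exact (norm_sub_le _ _).trans (by linarith)
  have hv : ∀ r, LipschitzWith (⟨C, hC⟩ : NNReal) (fun z => b r z (θ r)) := fun r =>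
    LipschitzWith.of_dist_le_mul fun u v => by
      rw [dist_eq_norm, dist_eq_norm]
      exact hbLip r (θ r) u v
  have key := dist_le_of_trajectories_ODE (v := fun r z => b r z (θ r)) hv hcont₂
    (fun r hr => (hderiv₂ r (Set.Ico_subset_Icc_self hr)).mono_of_mem_nhdsWithin
      (Icc_mem_nhdsGE_of_mem hr))
    (hcont₁.mono (Set.Icc_subset_Icc_left htt'))
    (fun r hr => (hderiv₁ r ⟨htt'.trans hr.1, hr.2.le⟩).mono_of_mem_nhdsWithin
      (Icc_mem_nhdsGE_of_mem ⟨htt'.trans hr.1, hr.2⟩)) h0 s hs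
  rw [dist_eq_norm] at key
  have hδ : 0 ≤ ‖x' - x‖ + M * (t' - t) := dist_nonneg.trans h0
  refine key.trans ?_
  rw [mul_comm]
  refine mul_le_mul_of_nonneg_right (Real.exp_le_exp.2 ?_) hδ
  exact mul_le_mul_of_nonneg_left (by linarith [hs.2]) hC
end

section
/- Let v₁, v₂ : ℝ → X → ℝ be bounded functions and let K ≥ 0 be such that |v₁(s, y) − v₂(s, y)| ≤ K for all (s, y). Then for every (s, y), |(F v₁)(s, y) − (F v₂)(s, y)| ≤ max(1 − λh, Φh) · K. In particular, F is a contraction on the space of bounded functions with contraction constant max(1 − λh, Φh) < 1. -/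
open scoped BigOperators

/-- The discrete approximation operator `F` of the approximate HJBI equation:
`(F v)(s, y) = min (max (sup_θ [(1-λh)·v(s+h, y + h·b(s,y,θ)) + h·f(s,y,θ)],
Φh · sup_ξ [v(s, y + g_ξ(s,y,ξ)) - c(s,y,ξ)]), Φh · inf_η [v(s, y + g_η(s,y,η)) + χ(s,y,η)])`. -/
noncomputable def approxOp (n l p q : ℕ) (lam h Φh : ℝ)
    (b : ℝ → EuclideanSpace ℝ (Fin n) → (Fin l → ℝ) → EuclideanSpace ℝ (Fin n))
    (f : ℝ → EuclideanSpace ℝ (Fin n) → (Fin l → ℝ) → ℝ)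
    (gξ : ℝ → EuclideanSpace ℝ (Fin n) → (Fin p → ℝ) → EuclideanSpace ℝ (Fin n))
    (gη : ℝ → EuclideanSpace ℝ (Fin n) → (Fin q → ℝ) → EuclideanSpace ℝ (Fin n))
    (c : ℝ → EuclideanSpace ℝ (Fin n) → (Fin p → ℝ) → ℝ)
    (χ : ℝ → EuclideanSpace ℝ (Fin n) → (Fin q → ℝ) → ℝ)
    (v : ℝ → EuclideanSpace ℝ (Fin n) → ℝ) :
    ℝ → EuclideanSpace ℝ (Fin n) → ℝ :=
  fun s y =>
    min
      (max
        (⨆ θ : Fin l → ℝ, ((1 - lam * h) * v (s + h) (y + h • b s y θ) + h * f s y θ))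
        (Φh * ⨆ ξ : Fin p → ℝ, (v s (y + gξ s y ξ) - c s y ξ)))
      (Φh * ⨅ η : Fin q → ℝ, (v s (y + gη s y η) + χ s y η))

theorem aux_iSup {ι : Type*} [Nonempty ι] (u w : ι → ℝ) (A B C : ℝ) (hu : ∀ i, u i ≤ A)
    (hw : ∀ i, w i ≤ B) (hd : ∀ i, |u i - w i| ≤ C) : |(⨆ i, u i) - ⨆ i, w i| ≤ C := by
  have bu : BddAbove (Set.range u) := ⟨A, by rintro _ ⟨i, rfl⟩; exact hu i⟩
  have bw : BddAbove (Set.range w) := ⟨B, by rintro _ ⟨i, rfl⟩; exact hw i⟩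
  have h1 : (⨆ i, u i) ≤ (⨆ i, w i) + C := ciSup_le fun i => by
    have := le_ciSup bw i
    have := abs_le.1 (hd i)
    linarith
  have h2 : (⨆ i, w i) ≤ (⨆ i, u i) + C := ciSup_le fun i => by
    have := le_ciSup bu i
    have := abs_le.1 (hd i)
    linarith
  rw [abs_le]
  constructor <;> linarith

theorem aux_iInf {ι : Type*} [Nonempty ι] (u w : ι → ℝ) (A B C : ℝ) (hu : ∀ i, A ≤ u i)
    (hw : ∀ i, B ≤ w i) (hd : ∀ i, |u i - w i| ≤ C) : |(⨅ i, u i) - ⨅ i, w i| ≤ C := by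
  have bu : BddBelow (Set.range u) := ⟨A, by rintro _ ⟨i, rfl⟩; exact hu i⟩
  have bw : BddBelow (Set.range w) := ⟨B, by rintro _ ⟨i, rfl⟩; exact hw i⟩
  have h1 : (⨅ i, u i) - C ≤ (⨅ i, w i) := le_ciInf fun i => by
    have := ciInf_le bu i
    have := abs_le.1 (hd i)
    linarith
  have h2 : (⨅ i, w i) - C ≤ (⨅ i, u i) := le_ciInf fun i => by
    have := ciInf_le bw i
    have := abs_le.1 (hd i)
    linarith
  rw [abs_le]
  constructor <;> linarith

/-- If `v₁` and `v₂` are bounded with `|v₁ - v₂| ≤ K` everywhere, then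
`|F v₁ - F v₂| ≤ max (1 - λh) Φh · K` everywhere; in particular `F` is a contraction
on bounded functions with contraction constant `max (1 - λh) Φh < 1`. -/
theorem approxOp_contraction
    (n l p q : ℕ) (lam h Φh : ℝ)
    (hlam : 0 < lam) (hh : 0 < h) (hh' : h < 1 / lam) (hΦ : 0 < Φh) (hΦ' : Φh < 1)
    (b : ℝ → EuclideanSpace ℝ (Fin n) → (Fin l → ℝ) → EuclideanSpace ℝ (Fin n))
    (f : ℝ → EuclideanSpace ℝ (Fin n) → (Fin l → ℝ) → ℝ)
    (gξ : ℝ → EuclideanSpace ℝ (Fin n) → (Fin p → ℝ) → EuclideanSpace ℝ (Fin n))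
    (gη : ℝ → EuclideanSpace ℝ (Fin n) → (Fin q → ℝ) → EuclideanSpace ℝ (Fin n))
    (c : ℝ → EuclideanSpace ℝ (Fin n) → (Fin p → ℝ) → ℝ)
    (χ : ℝ → EuclideanSpace ℝ (Fin n) → (Fin q → ℝ) → ℝ)
    (Mb : ℝ) (hbB : ∀ s y θ, ‖b s y θ‖ ≤ Mb)
    (Mf : ℝ) (hfB : ∀ s y θ, |f s y θ| ≤ Mf)
    (hc : ∀ s y ξ, 0 ≤ c s y ξ) (hχ : ∀ s y η, 0 ≤ χ s y η)
    (v₁ v₂ : ℝ → EuclideanSpace ℝ (Fin n) → ℝ)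
    (M₁ : ℝ) (hv₁ : ∀ s y, |v₁ s y| ≤ M₁)
    (M₂ : ℝ) (hv₂ : ∀ s y, |v₂ s y| ≤ M₂)
    (K : ℝ) (hK : 0 ≤ K) (hdist : ∀ s y, |v₁ s y - v₂ s y| ≤ K) :
    (∀ s y, |approxOp n l p q lam h Φh b f gξ gη c χ v₁ s y -
        approxOp n l p q lam h Φh b f gξ gη c χ v₂ s y| ≤ max (1 - lam * h) Φh * K) ∧
      max (1 - lam * h) Φh < 1 := by
  have hlh : lam * h < 1 := by
    rw [lt_div_iff₀ hlam] at hh'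
    linarith
  have hlh0 : 0 < lam * h := mul_pos hlam hh
  refine ⟨fun s y => ?_, max_lt (by linarith) hΦ'⟩
  have hmul : ∀ a d e : ℝ, 0 ≤ a → a ≤ max (1 - lam * h) Φh → |d - e| ≤ K →
      |a * d - a * e| ≤ max (1 - lam * h) Φh * K := by
    intro a d e ha ham hde
    rw [← mul_sub, abs_mul, abs_of_nonneg ha]
    exact mul_le_mul ham hde (abs_nonneg _) (ha.trans ham)
  have key : ∀ (v : ℝ → EuclideanSpace ℝ (Fin n) → ℝ) (M : ℝ), (∀ s y, |v s y| ≤ M) →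
      ∀ θ, (1 - lam * h) * v (s + h) (y + h • b s y θ) + h * f s y θ
        ≤ (1 - lam * h) * M + h * Mf := by
    intro v M hv θ
    have h1 := (abs_le.1 (hv (s + h) (y + h • b s y θ))).2
    have h2 := (abs_le.1 (hfB s y θ)).2
    have h3 : 0 ≤ 1 - lam * h := by linarith
    gcongr
  unfold approxOp
  refine (abs_min_sub_min_le_max _ _ _ _).trans (max_le
    ((abs_max_sub_max_le_max _ _ _ _).trans (max_le ?_ ?_)) ?_)
  · refine aux_iSup _ _ _ _ _ (key v₁ M₁ hv₁) (key v₂ M₂ hv₂) fun θ => ?_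
    rw [add_sub_add_right_eq_sub]
    exact hmul _ _ _ (by linarith) (le_max_left _ _) (hdist _ _)
  · refine hmul _ _ _ hΦ.le (le_max_right _ _) (aux_iSup _ _ M₁ M₂ _ (fun ξ => ?_) (fun ξ => ?_)
      fun ξ => ?_)
    · linarith [(abs_le.1 (hv₁ s (y + gξ s y ξ))).2, hc s y ξ]
    · linarith [(abs_le.1 (hv₂ s (y + gξ s y ξ))).2, hc s y ξ]
    · rw [sub_sub_sub_cancel_right]
      exact hdist _ _
  · refine hmul _ _ _ hΦ.le (le_max_right _ _) (aux_iInf _ _ (-M₁) (-M₂) _ (fun η => ?_)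
      (fun η => ?_) fun η => ?_)
    · linarith [(abs_le.1 (hv₁ s (y + gη s y η))).1, hχ s y η]
    · linarith [(abs_le.1 (hv₂ s (y + gη s y η))).1, hχ s y η]
    · rw [add_sub_add_right_eq_sub]
      exact hdist _ _
end

section
/- Fix T ∈ ℝ and a bounded function G : X → ℝ, and define the operator F_G on bounded functions v : ℝ → X → ℝ by (F_G v)(s, y) = G(y) if s ≥ T, and (F_G v)(s, y) = (F v)(s, y) if s < T. Then there exists a unique bounded function v_h : ℝ → X → ℝ such that v_h(s, y) = (F_G v_h)(s, y) for all (s, y); that is, v_h(T', y) = G(y) for every T' ≥ T and y, and v_h satisfies the approximate Hamilton-Jacobi-Bellman-Isaacs fixed-point equation v_h = F v_h at all times s < T. -/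
open scoped BigOperators

theorem bdd_contraction_aux {α : Type*} (F : (α → ℝ) → (α → ℝ)) (k : ℝ) (hk0 : 0 ≤ k) (hk1 : k < 1)
    (hF : ∀ v : α → ℝ, (∃ M, ∀ x, |v x| ≤ M) → ∃ M, ∀ x, |F v x| ≤ M)
    (hC : ∀ v w : α → ℝ, (∃ M, ∀ x, |v x| ≤ M) → (∃ M, ∀ x, |w x| ≤ M) → ∀ d, 0 ≤ d →
      (∀ x, |v x - w x| ≤ d) → ∀ x, |F v x - F w x| ≤ k * d) :
    ∃! v : α → ℝ, (∃ M, ∀ x, |v x| ≤ M) ∧ ∀ x, v x = F v x := by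
  let _ : TopologicalSpace α := ⊥
  have : DiscreteTopology α := ⟨rfl⟩
  have hb : ∀ v : BoundedContinuousFunction α ℝ, ∃ M, ∀ x, |v x| ≤ M :=
    fun v => ⟨‖v‖, fun x => v.norm_coe_le_norm x⟩
  have hmk : ∀ v : α → ℝ, (∃ M, ∀ x, |v x| ≤ M) →
      ∃ u : BoundedContinuousFunction α ℝ, ∀ x, u x = v x := by
    rintro v ⟨M, hM⟩
    exact ⟨BoundedContinuousFunction.ofNormedAddCommGroup v continuous_of_discreteTopology M hM,
      fun x => rfl⟩
  choose Φ hΦ using fun v : BoundedContinuousFunction α ℝ => hmk (F v) (hF v (hb v))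
  have hcon : ContractingWith ⟨k, hk0⟩ Φ := by
    refine ⟨by exact_mod_cast hk1, LipschitzWith.of_dist_le_mul fun v w => ?_⟩
    refine (BoundedContinuousFunction.dist_le (by positivity)).2 fun x => ?_
    rw [hΦ, hΦ, Real.dist_eq]
    exact hC v w (hb v) (hb w) _ dist_nonneg
      (fun x => by rw [← Real.dist_eq]; exact BoundedContinuousFunction.dist_coe_le_dist x) x
  refine ⟨(ContractingWith.fixedPoint Φ hcon : BoundedContinuousFunction α ℝ), ⟨hb _, fun x => ?_⟩, ?_⟩
  · rw [← hΦ, hcon.fixedPoint_isFixedPt]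
  · rintro v ⟨hvb, hv⟩
    obtain ⟨u, hu⟩ := hmk v hvb
    have huv : (u : α → ℝ) = v := funext hu
    have : Φ u = u := by
      ext x
      rw [hΦ, huv, ← hv]
    have := hcon.fixedPoint_unique this
    rw [← huv, this]

theorem approxOp_bdd_aux (n l p q : ℕ) (lam h Φh : ℝ) (hh : 0 < h) (hlh : lam * h < 1)
    (hl : 0 < lam * h) (hΦ : 0 < Φh) (hΦ' : Φh < 1)
    (b : ℝ → EuclideanSpace ℝ (Fin n) → (Fin l → ℝ) → EuclideanSpace ℝ (Fin n))
    (f : ℝ → EuclideanSpace ℝ (Fin n) → (Fin l → ℝ) → ℝ)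
    (gξ : ℝ → EuclideanSpace ℝ (Fin n) → (Fin p → ℝ) → EuclideanSpace ℝ (Fin n))
    (gη : ℝ → EuclideanSpace ℝ (Fin n) → (Fin q → ℝ) → EuclideanSpace ℝ (Fin n))
    (c : ℝ → EuclideanSpace ℝ (Fin n) → (Fin p → ℝ) → ℝ)
    (χ : ℝ → EuclideanSpace ℝ (Fin n) → (Fin q → ℝ) → ℝ)
    (Mf : ℝ) (hfB : ∀ s y θ, |f s y θ| ≤ Mf)
    (hc : ∀ s y ξ, 0 ≤ c s y ξ) (hχ : ∀ s y η, 0 ≤ χ s y η)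
    (v : ℝ → EuclideanSpace ℝ (Fin n) → ℝ) (M : ℝ) (hv : ∀ s y, |v s y| ≤ M) (s : ℝ)
    (y : EuclideanSpace ℝ (Fin n)) :
    |approxOp n l p q lam h Φh b f gξ gη c χ v s y| ≤ M + h * Mf := by
  have hM : 0 ≤ M := (abs_nonneg _).trans (hv s y)
  have hMf : 0 ≤ Mf := (abs_nonneg _).trans (hfB s y 0)
  have hhM : 0 ≤ h * Mf := by positivity
  have hθ : ∀ θ, |(1 - lam * h) * v (s + h) (y + h • b s y θ) + h * f s y θ| ≤ M + h * Mf := by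
    intro θ
    have h1 := abs_le.1 (hv (s + h) (y + h • b s y θ))
    have h2 := abs_le.1 (hfB s y θ)
    rw [abs_le]
    constructor <;> nlinarith
  have hbd : BddAbove (Set.range fun θ => (1 - lam * h) * v (s + h) (y + h • b s y θ) + h * f s y θ) :=
    ⟨M + h * Mf, by rintro _ ⟨θ, rfl⟩; exact (abs_le.1 (hθ θ)).2⟩
  unfold approxOp
  rw [abs_le]
  constructor
  · refine le_min (le_max_of_le_left ?_) ?_
    · exact (abs_le.1 (hθ 0)).1.trans (le_ciSup hbd 0)
    · have : -M ≤ ⨅ η : Fin q → ℝ, (v s (y + gη s y η) + χ s y η) :=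
        le_ciInf fun η => by linarith [(abs_le.1 (hv s (y + gη s y η))).1, hχ s y η]
      nlinarith
  · refine (min_le_left _ _).trans (max_le ?_ ?_)
    · exact ciSup_le fun θ => (abs_le.1 (hθ θ)).2
    · have : (⨆ ξ : Fin p → ℝ, (v s (y + gξ s y ξ) - c s y ξ)) ≤ M :=
        ciSup_le fun ξ => by linarith [(abs_le.1 (hv s (y + gξ s y ξ))).2, hc s y ξ]
      nlinarith

theorem approxOp_le_aux (n l p q : ℕ) (lam h Φh : ℝ) (hh : 0 < h) (hlh : lam * h < 1)
    (hΦ : 0 < Φh)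
    (b : ℝ → EuclideanSpace ℝ (Fin n) → (Fin l → ℝ) → EuclideanSpace ℝ (Fin n))
    (f : ℝ → EuclideanSpace ℝ (Fin n) → (Fin l → ℝ) → ℝ)
    (gξ : ℝ → EuclideanSpace ℝ (Fin n) → (Fin p → ℝ) → EuclideanSpace ℝ (Fin n))
    (gη : ℝ → EuclideanSpace ℝ (Fin n) → (Fin q → ℝ) → EuclideanSpace ℝ (Fin n))
    (c : ℝ → EuclideanSpace ℝ (Fin n) → (Fin p → ℝ) → ℝ)
    (χ : ℝ → EuclideanSpace ℝ (Fin n) → (Fin q → ℝ) → ℝ)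
    (Mf : ℝ) (hfB : ∀ s y θ, |f s y θ| ≤ Mf)
    (hc : ∀ s y ξ, 0 ≤ c s y ξ) (hχ : ∀ s y η, 0 ≤ χ s y η)
    (v w : ℝ → EuclideanSpace ℝ (Fin n) → ℝ) (M : ℝ) (hv : ∀ s y, |v s y| ≤ M)
    (N : ℝ) (hw : ∀ s y, |w s y| ≤ N) (d : ℝ) (hd : 0 ≤ d) (hvw : ∀ s y, v s y ≤ w s y + d)
    (s : ℝ) (y : EuclideanSpace ℝ (Fin n)) :
    approxOp n l p q lam h Φh b f gξ gη c χ v s y ≤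
      approxOp n l p q lam h Φh b f gξ gη c χ w s y + max (1 - lam * h) Φh * d := by
  have k1 : (1 - lam * h) * d ≤ max (1 - lam * h) Φh * d :=
    mul_le_mul_of_nonneg_right (le_max_left _ _) hd
  have k2 : Φh * d ≤ max (1 - lam * h) Φh * d :=
    mul_le_mul_of_nonneg_right (le_max_right _ _) hd
  have b1 : BddAbove (Set.range fun θ : Fin l → ℝ =>
      (1 - lam * h) * w (s + h) (y + h • b s y θ) + h * f s y θ) := by
    refine ⟨(1 - lam * h) * N + h * Mf, ?_⟩
    rintro _ ⟨θ, rfl⟩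
    have h1 := abs_le.1 (hw (s + h) (y + h • b s y θ))
    have h2 := abs_le.1 (hfB s y θ)
    nlinarith
  have b2 : BddAbove (Set.range fun ξ : Fin p → ℝ => w s (y + gξ s y ξ) - c s y ξ) := by
    refine ⟨N, ?_⟩
    rintro _ ⟨ξ, rfl⟩
    linarith [(abs_le.1 (hw s (y + gξ s y ξ))).2, hc s y ξ]
  have b3 : BddBelow (Set.range fun η : Fin q → ℝ => v s (y + gη s y η) + χ s y η) := by
    refine ⟨-M, ?_⟩
    rintro _ ⟨η, rfl⟩
    linarith [(abs_le.1 (hv s (y + gη s y η))).1, hχ s y η]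
  have e1 : (⨆ θ : Fin l → ℝ, ((1 - lam * h) * v (s + h) (y + h • b s y θ) + h * f s y θ)) ≤
      (⨆ θ : Fin l → ℝ, ((1 - lam * h) * w (s + h) (y + h • b s y θ) + h * f s y θ))
        + (1 - lam * h) * d := by
    refine ciSup_le fun θ => ?_
    have h1 := le_ciSup b1 θ
    have h2 := hvw (s + h) (y + h • b s y θ)
    nlinarith
  have e2 : (⨆ ξ : Fin p → ℝ, (v s (y + gξ s y ξ) - c s y ξ)) ≤
      (⨆ ξ : Fin p → ℝ, (w s (y + gξ s y ξ) - c s y ξ)) + d := by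
    refine ciSup_le fun ξ => ?_
    have h1 := le_ciSup b2 ξ
    have h2 := hvw s (y + gξ s y ξ)
    linarith
  have e3 : (⨅ η : Fin q → ℝ, (v s (y + gη s y η) + χ s y η)) - d ≤
      (⨅ η : Fin q → ℝ, (w s (y + gη s y η) + χ s y η)) := by
    refine le_ciInf fun η => ?_
    have h1 := ciInf_le b3 η
    have h2 := hvw s (y + gη s y η)
    linarith
  have e2' := mul_le_mul_of_nonneg_left e2 hΦ.le
  have e3' := mul_le_mul_of_nonneg_left e3 hΦ.le
  rw [mul_add] at e2'
  rw [mul_sub] at e3'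
  unfold approxOp
  rw [← min_add_add_right, ← max_add_add_right]
  refine min_le_min (max_le_max ?_ ?_) ?_ <;> linarith

/-- Theorem 4.1: with terminal condition `G` at horizon `T`, the operator
`(F_G v)(s,y) = G y` for `s ≥ T` and `(F_G v)(s,y) = (F v)(s,y)` for `s < T`
has a unique bounded fixed point `v_h`: the approximate value function. -/
theorem approx_value_function_exists_unique
    (n l p q : ℕ) (lam h Φh : ℝ)
    (hlam : 0 < lam) (hh : 0 < h) (hh' : h < 1 / lam) (hΦ : 0 < Φh) (hΦ' : Φh < 1)
    (b : ℝ → EuclideanSpace ℝ (Fin n) → (Fin l → ℝ) → EuclideanSpace ℝ (Fin n))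
    (f : ℝ → EuclideanSpace ℝ (Fin n) → (Fin l → ℝ) → ℝ)
    (gξ : ℝ → EuclideanSpace ℝ (Fin n) → (Fin p → ℝ) → EuclideanSpace ℝ (Fin n))
    (gη : ℝ → EuclideanSpace ℝ (Fin n) → (Fin q → ℝ) → EuclideanSpace ℝ (Fin n))
    (c : ℝ → EuclideanSpace ℝ (Fin n) → (Fin p → ℝ) → ℝ)
    (χ : ℝ → EuclideanSpace ℝ (Fin n) → (Fin q → ℝ) → ℝ)
    (Mb : ℝ) (hbB : ∀ s y θ, ‖b s y θ‖ ≤ Mb)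
    (Mf : ℝ) (hfB : ∀ s y θ, |f s y θ| ≤ Mf)
    (hc : ∀ s y ξ, 0 ≤ c s y ξ) (hχ : ∀ s y η, 0 ≤ χ s y η)
    (T : ℝ) (G : EuclideanSpace ℝ (Fin n) → ℝ)
    (MG : ℝ) (hG : ∀ y, |G y| ≤ MG) :
    ∃! vh : ℝ → EuclideanSpace ℝ (Fin n) → ℝ,
      (∃ M : ℝ, ∀ s y, |vh s y| ≤ M) ∧
      ∀ s y, vh s y =
        if T ≤ s then G y else approxOp n l p q lam h Φh b f gξ gη c χ vh s y := by
  have hl : 0 < lam * h := mul_pos hlam hh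
  have hlh : lam * h < 1 := by
    rw [lt_div_iff₀ hlam] at hh'
    linarith
  have key := bdd_contraction_aux (α := ℝ × EuclideanSpace ℝ (Fin n))
    (fun v x => if T ≤ x.1 then G x.2 else
      approxOp n l p q lam h Φh b f gξ gη c χ (fun s y => v (s, y)) x.1 x.2)
    (max (1 - lam * h) Φh) (le_max_of_le_right hΦ.le) (max_lt (by linarith) hΦ')
    (by
      rintro v ⟨M, hM⟩
      refine ⟨max MG (M + h * Mf), fun x => ?_⟩
      split_ifs
      · exact (hG _).trans (le_max_left _ _)
      · exact (approxOp_bdd_aux n l p q lam h Φh hh hlh hl hΦ hΦ' b f gξ gη c χ Mf hfB hc hχ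
          _ M (fun s y => hM (s, y)) _ _).trans (le_max_right _ _))
    (by
      rintro v w ⟨M, hM⟩ ⟨N, hN⟩ d hd hvw x
      split_ifs
      · rw [sub_self, abs_zero]
        exact mul_nonneg (le_max_of_le_right hΦ.le) hd
      · have h1 := approxOp_le_aux n l p q lam h Φh hh hlh hΦ b f gξ gη c χ Mf hfB hc hχ
          (fun s y => v (s, y)) (fun s y => w (s, y)) M (fun s y => hM (s, y)) N
          (fun s y => hN (s, y)) d hd (fun s y => by linarith [(abs_le.1 (hvw (s, y))).2]) x.1 x.2
        have h2 := approxOp_le_aux n l p q lam h Φh hh hlh hΦ b f gξ gη c χ Mf hfB hc hχ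
          (fun s y => w (s, y)) (fun s y => v (s, y)) N (fun s y => hN (s, y)) M
          (fun s y => hM (s, y)) d hd (fun s y => by linarith [(abs_le.1 (hvw (s, y))).1]) x.1 x.2
        rw [abs_le]
        constructor <;> linarith)
  obtain ⟨v, ⟨⟨M, hM⟩, hv⟩, hu⟩ := key
  refine ⟨fun s y => v (s, y), ⟨⟨M, fun s y => hM (s, y)⟩, fun s y => hv (s, y)⟩, ?_⟩
  rintro w ⟨⟨N, hN⟩, hw⟩
  have := hu (fun x => w x.1 x.2) ⟨⟨N, fun x => hN x.1 x.2⟩, fun x => hw x.1 x.2⟩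
  funext s y
  exact congrFun this (s, y)
end

section
/- Suppose v : ℝ → X → ℝ is bounded, nonnegative, and satisfies v(s, y) = (F v)(s, y) for all (s, y). Then sup_{(s,y)} v(s, y) ≤ (sup_{(s,y,θ)} |f(s, y, θ)|) / λ. -/
open scoped BigOperators

/-- Uniform bound of Lemma 4.1: a bounded nonnegative fixed point `v` of the
approximation operator `F` satisfies `sup v ≤ ‖f‖_∞ / λ`. -/
theorem approx_value_function_uniform_bound
    (n l p q : ℕ) (lam h Φh : ℝ)
    (hlam : 0 < lam) (hh : 0 < h) (hh' : h < 1 / lam) (hΦ : 0 < Φh) (hΦ' : Φh < 1)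
    (b : ℝ → EuclideanSpace ℝ (Fin n) → (Fin l → ℝ) → EuclideanSpace ℝ (Fin n))
    (f : ℝ → EuclideanSpace ℝ (Fin n) → (Fin l → ℝ) → ℝ)
    (gξ : ℝ → EuclideanSpace ℝ (Fin n) → (Fin p → ℝ) → EuclideanSpace ℝ (Fin n))
    (gη : ℝ → EuclideanSpace ℝ (Fin n) → (Fin q → ℝ) → EuclideanSpace ℝ (Fin n))
    (c : ℝ → EuclideanSpace ℝ (Fin n) → (Fin p → ℝ) → ℝ)
    (χ : ℝ → EuclideanSpace ℝ (Fin n) → (Fin q → ℝ) → ℝ)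
    (Mb : ℝ) (hbB : ∀ s y θ, ‖b s y θ‖ ≤ Mb)
    (Mf : ℝ) (hfB : ∀ s y θ, |f s y θ| ≤ Mf)
    (hc : ∀ s y ξ, 0 ≤ c s y ξ) (hχ : ∀ s y η, 0 ≤ χ s y η)
    (v : ℝ → EuclideanSpace ℝ (Fin n) → ℝ)
    (Mv : ℝ) (hvB : ∀ s y, |v s y| ≤ Mv)
    (hvPos : ∀ s y, 0 ≤ v s y)
    (hfix : ∀ s y, v s y = approxOp n l p q lam h Φh b f gξ gη c χ v s y) :
    (⨆ s : ℝ, ⨆ y : EuclideanSpace ℝ (Fin n), v s y) ≤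
      (⨆ s : ℝ, ⨆ y : EuclideanSpace ℝ (Fin n), ⨆ θ : Fin l → ℝ, |f s y θ|) / lam := by
  set S := (⨆ s : ℝ, ⨆ y : EuclideanSpace ℝ (Fin n), v s y) with hS
  set K := (⨆ s : ℝ, ⨆ y : EuclideanSpace ℝ (Fin n), ⨆ θ : Fin l → ℝ, |f s y θ|) with hK
  have hvM : ∀ s y, v s y ≤ Mv := fun s y => (le_abs_self _).trans (hvB s y)
  have hvS : ∀ s y, v s y ≤ S := by
    intro s y
    have h1 : v s y ≤ ⨆ y, v s y :=
      le_ciSup (f := fun y => v s y) ⟨Mv, by rintro _ ⟨y, rfl⟩; exact hvM s y⟩ y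
    have h2 : (⨆ y, v s y) ≤ S :=
      le_ciSup (f := fun s => ⨆ y, v s y)
        ⟨Mv, by rintro _ ⟨s, rfl⟩; exact ciSup_le (hvM s)⟩ s
    exact h1.trans h2
  have hfK : ∀ s y θ, |f s y θ| ≤ K := by
    intro s y θ
    have h1 : |f s y θ| ≤ ⨆ θ, |f s y θ| :=
      le_ciSup (f := fun θ => |f s y θ|) ⟨Mf, by rintro _ ⟨θ, rfl⟩; exact hfB s y θ⟩ θ
    have h2 : (⨆ θ, |f s y θ|) ≤ ⨆ y, ⨆ θ, |f s y θ| :=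
      le_ciSup (f := fun y => ⨆ θ, |f s y θ|)
        ⟨Mf, by rintro _ ⟨y, rfl⟩; exact ciSup_le (hfB s y)⟩ y
    have h3 : (⨆ y, ⨆ θ, |f s y θ|) ≤ K :=
      le_ciSup (f := fun s => ⨆ y, ⨆ θ, |f s y θ|)
        ⟨Mf, by rintro _ ⟨s, rfl⟩; exact ciSup_le fun y => ciSup_le (hfB s y)⟩ s
    exact h1.trans (h2.trans h3)
  have hK0 : 0 ≤ K := (abs_nonneg _).trans (hfK 0 0 0)
  have hlh : lam * h < 1 := by
    rw [lt_div_iff₀ hlam] at hh'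
    linarith
  have key : S ≤ max ((1 - lam * h) * S + h * K) (Φh * S) := by
    refine ciSup_le fun s => ciSup_le fun y => ?_
    rw [hfix s y]
    refine (min_le_left _ _).trans (max_le_max ?_ ?_)
    · refine ciSup_le fun θ => add_le_add ?_ ?_
      · exact mul_le_mul_of_nonneg_left (hvS _ _) (by linarith)
      · exact mul_le_mul_of_nonneg_left ((le_abs_self _).trans (hfK s y θ)) hh.le
    · refine mul_le_mul_of_nonneg_left (ciSup_le fun ξ => ?_) hΦ.le
      linarith [hvS s (y + gξ s y ξ), hc s y ξ]
  rw [le_div_iff₀ hlam]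
  rcases le_max_iff.mp key with h1 | h1
  · have h2 : h * (S * lam) ≤ h * K := by linarith
    exact le_of_mul_le_mul_left h2 hh
  · have h2 : S ≤ 0 := by nlinarith
    nlinarith
end

section
/- Let ε > 0 and δ₀ > 0, and suppose the bounded function v : ℝ → X → ℝ satisfies: for all s and all y₁, y₂ ∈ X with ‖y₁ − y₂‖ ≤ δ₀, |v(s, y₁) − v(s, y₂)| ≤ ε/2. Assume moreover that for all s, θ, ξ, η the maps y ↦ b(s, y, θ), y ↦ f(s, y, θ), y ↦ g_ξ(s, y, ξ), y ↦ g_η(s, y, η), y ↦ c(s, y, ξ), y ↦ χ(s, y, η) are Lipschitz with constants C_b, C_f, C_g, C_g, C_c, C_χ respectively (all strictly positive and independent of s, θ, ξ, η). Set δ := min( δ₀/(1 + C_b/λ), λε/(2·C_f), δ₀/(1 + C_g), ε/(2·C_c), ε/(2·C_χ) ). Then for every s and all y₁, y₂ ∈ X with ‖y₁ − y₂‖ ≤ δ, |(F v)(s, y₁) − (F v)(s, y₂)| ≤ ε. In particular, the modulus δ does not depend on the time step h ∈ (0, 1/λ). -/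
open scoped BigOperators

/-- One-step equicontinuity propagation underlying Lemma 4.1: if `v` has modulus of
continuity `(δ₀, ε/2)` in the state variable and the data are Lipschitz in the state,
then `F v` has modulus `(δ, ε)` with
`δ = min(δ₀/(1 + C_b/λ), λε/(2C_f), δ₀/(1 + C_g), ε/(2C_c), ε/(2C_χ))`,
a modulus independent of the time step `h ∈ (0, 1/λ)`. -/
theorem approxOp_equicontinuity
    (n l p q : ℕ) (lam h Φh : ℝ)
    (hlam : 0 < lam) (hh : 0 < h) (hh' : h < 1 / lam) (hΦ : 0 < Φh) (hΦ' : Φh < 1)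
    (b : ℝ → EuclideanSpace ℝ (Fin n) → (Fin l → ℝ) → EuclideanSpace ℝ (Fin n))
    (f : ℝ → EuclideanSpace ℝ (Fin n) → (Fin l → ℝ) → ℝ)
    (gξ : ℝ → EuclideanSpace ℝ (Fin n) → (Fin p → ℝ) → EuclideanSpace ℝ (Fin n))
    (gη : ℝ → EuclideanSpace ℝ (Fin n) → (Fin q → ℝ) → EuclideanSpace ℝ (Fin n))
    (c : ℝ → EuclideanSpace ℝ (Fin n) → (Fin p → ℝ) → ℝ)
    (χ : ℝ → EuclideanSpace ℝ (Fin n) → (Fin q → ℝ) → ℝ)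
    (Mb : ℝ) (hbB : ∀ s y θ, ‖b s y θ‖ ≤ Mb)
    (Mf : ℝ) (hfB : ∀ s y θ, |f s y θ| ≤ Mf)
    (hc : ∀ s y ξ, 0 ≤ c s y ξ) (hχ : ∀ s y η, 0 ≤ χ s y η)
    (v : ℝ → EuclideanSpace ℝ (Fin n) → ℝ)
    (Mv : ℝ) (hvB : ∀ s y, |v s y| ≤ Mv)
    (ε δ₀ : ℝ) (hε : 0 < ε) (hδ₀ : 0 < δ₀)
    (hvMod : ∀ (s : ℝ) (y₁ y₂ : EuclideanSpace ℝ (Fin n)),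
      ‖y₁ - y₂‖ ≤ δ₀ → |v s y₁ - v s y₂| ≤ ε / 2)
    (Cb Cf Cg Cc Cχ : ℝ)
    (hCb : 0 < Cb) (hCf : 0 < Cf) (hCg : 0 < Cg) (hCc : 0 < Cc) (hCχ : 0 < Cχ)
    (hbLip : ∀ (s : ℝ) (θ : Fin l → ℝ) (y₁ y₂ : EuclideanSpace ℝ (Fin n)),
      ‖b s y₁ θ - b s y₂ θ‖ ≤ Cb * ‖y₁ - y₂‖)
    (hfLip : ∀ (s : ℝ) (θ : Fin l → ℝ) (y₁ y₂ : EuclideanSpace ℝ (Fin n)),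
      |f s y₁ θ - f s y₂ θ| ≤ Cf * ‖y₁ - y₂‖)
    (hgξLip : ∀ (s : ℝ) (ξ : Fin p → ℝ) (y₁ y₂ : EuclideanSpace ℝ (Fin n)),
      ‖gξ s y₁ ξ - gξ s y₂ ξ‖ ≤ Cg * ‖y₁ - y₂‖)
    (hgηLip : ∀ (s : ℝ) (η : Fin q → ℝ) (y₁ y₂ : EuclideanSpace ℝ (Fin n)),
      ‖gη s y₁ η - gη s y₂ η‖ ≤ Cg * ‖y₁ - y₂‖)
    (hcLip : ∀ (s : ℝ) (ξ : Fin p → ℝ) (y₁ y₂ : EuclideanSpace ℝ (Fin n)),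
      |c s y₁ ξ - c s y₂ ξ| ≤ Cc * ‖y₁ - y₂‖)
    (hχLip : ∀ (s : ℝ) (η : Fin q → ℝ) (y₁ y₂ : EuclideanSpace ℝ (Fin n)),
      |χ s y₁ η - χ s y₂ η| ≤ Cχ * ‖y₁ - y₂‖) :
    ∀ (s : ℝ) (y₁ y₂ : EuclideanSpace ℝ (Fin n)),
      ‖y₁ - y₂‖ ≤ min (δ₀ / (1 + Cb / lam)) (min (lam * ε / (2 * Cf))
        (min (δ₀ / (1 + Cg)) (min (ε / (2 * Cc)) (ε / (2 * Cχ))))) →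
      |approxOp n l p q lam h Φh b f gξ gη c χ v s y₁ -
        approxOp n l p q lam h Φh b f gξ gη c χ v s y₂| ≤ ε := by
  have key : ∀ (s : ℝ) (y₁ y₂ : EuclideanSpace ℝ (Fin n)),
      ‖y₁ - y₂‖ ≤ min (δ₀ / (1 + Cb / lam)) (min (lam * ε / (2 * Cf))
        (min (δ₀ / (1 + Cg)) (min (ε / (2 * Cc)) (ε / (2 * Cχ))))) →
      approxOp n l p q lam h Φh b f gξ gη c χ v s y₁ ≤
        approxOp n l p q lam h Φh b f gξ gη c χ v s y₂ + ε := by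
    intro s y₁ y₂ hy
    simp only [le_min_iff] at hy
    obtain ⟨h1, h2, h3, h4, h5⟩ := hy
    have hlh : lam * h < 1 := by
      rw [lt_div_iff₀ hlam] at hh'; linarith
    rw [le_div_iff₀ (by positivity)] at h1 h2 h3 h4 h5
    have hN := norm_nonneg (y₁ - y₂)
    have hshift : ∀ (C : ℝ) (u w : EuclideanSpace ℝ (Fin n)), ‖u - w‖ ≤ C * ‖y₁ - y₂‖ →
        ‖y₁ - y₂‖ * (1 + C) ≤ δ₀ → ‖(y₁ + u) - (y₂ + w)‖ ≤ δ₀ := by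
      intro C u w hu hC
      have e : (y₁ + u) - (y₂ + w) = (y₁ - y₂) + (u - w) := by abel
      rw [e]
      have := norm_add_le (y₁ - y₂) (u - w)
      linarith
    have A : (⨆ θ : Fin l → ℝ, ((1 - lam * h) * v (s + h) (y₁ + h • b s y₁ θ) + h * f s y₁ θ))
        ≤ (⨆ θ : Fin l → ℝ, ((1 - lam * h) * v (s + h) (y₂ + h • b s y₂ θ) + h * f s y₂ θ))
          + ε := by
      apply ciSup_le
      intro θ
      have hb : BddAbove (Set.range fun θ : Fin l → ℝ =>
          ((1 - lam * h) * v (s + h) (y₂ + h • b s y₂ θ) + h * f s y₂ θ)) := by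
        refine ⟨(1 - lam * h) * Mv + h * Mf, ?_⟩
        rintro _ ⟨θ, rfl⟩
        have a1 := (abs_le.1 (hvB (s + h) (y₂ + h • b s y₂ θ))).2
        have a2 := (abs_le.1 (hfB s y₂ θ)).2
        have a3 := mul_le_mul_of_nonneg_left a1 (by linarith : 0 ≤ 1 - lam * h)
        have a4 := mul_le_mul_of_nonneg_left a2 hh.le
        simp only
        linarith
      have a0 := le_ciSup hb θ
      have hd : ‖(y₁ + h • b s y₁ θ) - (y₂ + h • b s y₂ θ)‖ ≤ δ₀ := by
        refine hshift (Cb / lam) _ _ ?_ h1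
        rw [← smul_sub, norm_smul, Real.norm_of_nonneg hh.le]
        calc h * ‖b s y₁ θ - b s y₂ θ‖ ≤ (1 / lam) * (Cb * ‖y₁ - y₂‖) :=
              mul_le_mul hh'.le (hbLip s θ y₁ y₂) (norm_nonneg _) (by positivity)
          _ = _ := by ring
      have a1 := (abs_le.1 (hvMod (s + h) _ _ hd)).2
      have a2 := (abs_le.1 (hfLip s θ y₁ y₂)).2
      have a3 := mul_le_mul_of_nonneg_left a1 (by linarith : 0 ≤ 1 - lam * h)
      have a4 : f s y₁ θ - f s y₂ θ ≤ lam * ε / 2 := by linarith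
      have a5 := mul_le_mul_of_nonneg_left a4 hh.le
      nlinarith
    have B : (⨆ ξ : Fin p → ℝ, (v s (y₁ + gξ s y₁ ξ) - c s y₁ ξ))
        ≤ (⨆ ξ : Fin p → ℝ, (v s (y₂ + gξ s y₂ ξ) - c s y₂ ξ)) + ε := by
      apply ciSup_le
      intro ξ
      have hb : BddAbove (Set.range fun ξ : Fin p → ℝ => (v s (y₂ + gξ s y₂ ξ) - c s y₂ ξ)) := by
        refine ⟨Mv, ?_⟩
        rintro _ ⟨ξ, rfl⟩
        have a1 := (abs_le.1 (hvB s (y₂ + gξ s y₂ ξ))).2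
        have a2 := hc s y₂ ξ
        simp only
        linarith
      have a0 := le_ciSup hb ξ
      have a1 := (abs_le.1 (hvMod s _ _ (hshift Cg _ _ (hgξLip s ξ y₁ y₂) h3))).2
      have a2 := (abs_le.1 (hcLip s ξ y₁ y₂)).1
      linarith
    have D : (⨅ η : Fin q → ℝ, (v s (y₁ + gη s y₁ η) + χ s y₁ η)) - ε
        ≤ ⨅ η : Fin q → ℝ, (v s (y₂ + gη s y₂ η) + χ s y₂ η) := by
      apply le_ciInf
      intro η
      have hb : BddBelow (Set.range fun η : Fin q → ℝ => (v s (y₁ + gη s y₁ η) + χ s y₁ η)) := by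
        refine ⟨-Mv, ?_⟩
        rintro _ ⟨η, rfl⟩
        have a1 := (abs_le.1 (hvB s (y₁ + gη s y₁ η))).1
        have a2 := hχ s y₁ η
        simp only
        linarith
      have a0 := ciInf_le hb η
      have a1 := (abs_le.1 (hvMod s _ _ (hshift Cg _ _ (hgηLip s η y₁ y₂) h3))).2
      have a2 := (abs_le.1 (hχLip s η y₁ y₂)).2
      linarith
    have hΦε : Φh * ε ≤ ε := by nlinarith
    have B' := mul_le_mul_of_nonneg_left B hΦ.le
    have D' := mul_le_mul_of_nonneg_left D hΦ.le
    rw [mul_add] at B'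
    rw [mul_sub] at D'
    unfold approxOp
    rw [← min_add_add_right, ← max_add_add_right]
    exact min_le_min (max_le_max A (by linarith)) (by linarith)
  intro s y₁ y₂ hy
  have k1 := key s y₁ y₂ hy
  have k2 := key s y₂ y₁ (by rwa [norm_sub_rev])
  rw [abs_le]
  constructor <;> linarith
end

section
/- Let X = EuclideanSpace ℝ (Fin n), let T > 0, let u, v : ℝ × X → ℝ be bounded and uniformly continuous, and let 0 < μ ≤ 1. For ε, β > 0 define Γ(t, x, y) = μ·u(t, x) − v(t, y) − ‖x − y‖²/ε² − β·(‖x‖² + ‖y‖²) on [0, T] × X × X. Then for every η > 0 there exist ε₀ > 0 and β₀ > 0 such that for all 0 < ε ≤ ε₀ and 0 < β ≤ β₀, every global maximum point (t_m, x_m, y_m) of Γ over [0, T] × X × X satisfies ‖x_m − y_m‖²/ε² + β·(‖x_m‖² + ‖y_m‖²) ≤ η. -/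
/-- Penalization estimate (equation (3.10)) in Step 2 of the proof of the comparison
theorem: at any global maximum point of the doubling-of-variables test function
`Γ(t,x,y) = μ·u(t,x) - v(t,y) - ‖x-y‖²/ε² - β(‖x‖² + ‖y‖²)` over `[0,T] × X × X`,
the penalty terms can be made arbitrarily small uniformly for small `ε` and `β`. -/
theorem doubling_penalization_estimate
    (n : ℕ) (T : ℝ) (hT : 0 < T)
    (u v : ℝ × EuclideanSpace ℝ (Fin n) → ℝ)
    (Mu : ℝ) (hub : ∀ p, |u p| ≤ Mu) (Mv : ℝ) (hvb : ∀ p, |v p| ≤ Mv)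
    (hu : UniformContinuous u) (hv : UniformContinuous v)
    (μ : ℝ) (hμ0 : 0 < μ) (hμ1 : μ ≤ 1) :
    ∀ η : ℝ, 0 < η → ∃ ε₀ > (0 : ℝ), ∃ β₀ > (0 : ℝ), ∀ ε β : ℝ,
      0 < ε → ε ≤ ε₀ → 0 < β → β ≤ β₀ →
      ∀ tm ∈ Set.Icc (0 : ℝ) T, ∀ xm ym : EuclideanSpace ℝ (Fin n),
        (∀ t ∈ Set.Icc (0 : ℝ) T, ∀ x y : EuclideanSpace ℝ (Fin n),
          μ * u (t, x) - v (t, y) - ‖x - y‖ ^ 2 / ε ^ 2 - β * (‖x‖ ^ 2 + ‖y‖ ^ 2) ≤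
          μ * u (tm, xm) - v (tm, ym) - ‖xm - ym‖ ^ 2 / ε ^ 2 -
            β * (‖xm‖ ^ 2 + ‖ym‖ ^ 2)) →
        ‖xm - ym‖ ^ 2 / ε ^ 2 + β * (‖xm‖ ^ 2 + ‖ym‖ ^ 2) ≤ η := by
  intro η hη
  set S : Set ℝ := {r | ∃ t ∈ Set.Icc (0 : ℝ) T, ∃ x, r = μ * u (t, x) - v (t, x)} with hS
  have hMu : 0 ≤ Mu := (abs_nonneg _).trans (hub (0, 0))
  have hMv : 0 ≤ Mv := (abs_nonneg _).trans (hvb (0, 0))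
  have hbu : ∀ p, -Mu ≤ μ * u p ∧ μ * u p ≤ Mu := by
    intro p
    have h : |μ * u p| ≤ Mu := by
      rw [abs_mul, abs_of_pos hμ0]
      calc μ * |u p| ≤ 1 * |u p| := by gcongr
        _ ≤ Mu := by simpa using hub p
    exact abs_le.mp h
  have hbv : ∀ p, -Mv ≤ v p ∧ v p ≤ Mv := fun p => abs_le.mp (hvb p)
  have hne : S.Nonempty := ⟨_, 0, ⟨le_refl _, hT.le⟩, 0, rfl⟩
  have hbdd : BddAbove S := by
    refine ⟨Mu + Mv, ?_⟩
    rintro r ⟨t, _, x, rfl⟩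
    linarith [(hbu (t, x)).2, (hbv (t, x)).1]
  obtain ⟨r, ⟨ts, hts, xs, rfl⟩, hlt⟩ :=
    exists_lt_of_lt_csSup hne (show sSup S - η / 4 < sSup S by linarith)
  obtain ⟨δ, hδ, hvδ⟩ := Metric.uniformContinuous_iff.mp hv (η / 2) (by linarith)
  obtain ⟨C, hC⟩ : ∃ C, C = 2 * (Mu + Mv) + 1 := ⟨_, rfl⟩
  have hC1 : 1 ≤ C := by linarith
  refine ⟨δ / (C + 1), by positivity, η / (8 * (‖xs‖ ^ 2 + 1)), by positivity, ?_⟩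
  intro ε β hε hε0 hβ hβ0 tm htm xm ym hmax
  have h1 := hmax tm htm 0 0
  have h2 := hmax ts hts xs xs
  simp only [sub_self, norm_zero] at h1 h2
  have hq : 0 ≤ β * (‖xm‖ ^ 2 + ‖ym‖ ^ 2) := by positivity
  have hP : ‖xm - ym‖ ^ 2 / ε ^ 2 ≤ C := by
    have a1 := hbu (tm, xm)
    have a2 := hbu (tm, 0)
    have a3 := hbv (tm, ym)
    have a4 := hbv (tm, 0)
    norm_num at h1
    linarith
  have hdist : ‖xm - ym‖ < δ := by
    rw [div_le_iff₀ (by positivity)] at hP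
    rw [le_div_iff₀ (by positivity)] at hε0
    refine lt_of_pow_lt_pow_left₀ 2 hδ.le ?_
    calc ‖xm - ym‖ ^ 2 ≤ C * ε ^ 2 := hP
      _ < (C + 1) ^ 2 * ε ^ 2 := by
        have : C < (C + 1) ^ 2 := by nlinarith
        gcongr
      _ = (ε * (C + 1)) ^ 2 := by ring
      _ ≤ δ ^ 2 := by gcongr
  have hv2 : |v (tm, xm) - v (tm, ym)| < η / 2 := by
    have := @hvδ (tm, xm) (tm, ym) (by simpa [Prod.dist_eq, dist_eq_norm, hδ] using hdist)
    simpa [Real.dist_eq] using this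
  have hsup : μ * u (tm, xm) - v (tm, xm) ≤ sSup S := le_csSup hbdd ⟨tm, htm, xm, rfl⟩
  have hb : β * (‖xs‖ ^ 2 + ‖xs‖ ^ 2) ≤ η / 4 := by
    rw [le_div_iff₀ (by positivity)] at hβ0
    nlinarith
  have h3 := (abs_lt.mp hv2).2
  norm_num at h2
  linarith
end
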